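/- arXiv:1706.05747 — 3 statements merged into one kernel-verified Lean document; each statement's English description precedes it below -/
import Mathlib

section
/- Let μ be a σ-finite measure on (0,∞) satisfying assumption (H): ∫₀^∞ (r ∨ r^p) μ(dr) < ∞ for some 1 < p < 2. For N ≥ 1 and k ≥ 1 set w_{k,N} = (1/(k+1)!) ∫₀^∞ (Nr)^{k+1} e^{−Nr} μ(dr). Then for every bounded continuous function h : [0,∞) → ℝ, ∑_{k≥1} h(k/N) ((k/N)² ∧ 1) w_{k,N} → ∫₀^∞ h(z) (z² ∧ 1) μ(dz) as N → ∞; that is, the finite measures π̄_N = ∑_{k≥1} ((k/N)² ∧ 1) w_{k,N} δ_{k/N} converge weakly to π̄(dz) = (z² ∧ 1) μ(dz). -/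
open MeasureTheory

/-- The Poisson weights `e^{-a} a^k / k!` sum to one. -/
lemma hasSum_poissonWeight (a : ℝ) :
    HasSum (fun k : ℕ => Real.exp (-a) * (a ^ k / (k.factorial : ℝ))) 1 := by
  have h := (NormedSpace.expSeries_div_hasSum_exp a).mul_left (Real.exp (-a))
  rwa [← Real.exp_eq_exp_ℝ, ← Real.exp_add, neg_add_cancel, Real.exp_zero] at h

lemma hasSum_poissonWeight_succ (a : ℝ) :
    HasSum (fun k : ℕ => Real.exp (-a) * (a ^ (k + 1) / ((k + 1).factorial : ℝ)))
      (1 - Real.exp (-a)) := by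
  simpa using (hasSum_nat_add_iff' 1).2 (hasSum_poissonWeight a)

lemma hasSum_poissonWeight_add_two (a : ℝ) :
    HasSum (fun k : ℕ => Real.exp (-a) * (a ^ (k + 2) / ((k + 2).factorial : ℝ)))
      (1 - Real.exp (-a) * (1 + a)) := by
  have h := (hasSum_nat_add_iff' 2).2 (hasSum_poissonWeight a)
  have hval : 1 - Real.exp (-a) * (1 + a) =
      1 - ∑ k ∈ Finset.range 2, Real.exp (-a) * (a ^ k / (k.factorial : ℝ)) := by
    simp [Finset.sum_range_succ]
    ring
  rwa [hval]

/-- Truncated second moment of `X - 1` around the mean `a` of a Poisson variable `X`. -/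
lemma hasSum_poissonWeight_mul_sq (a : ℝ) :
    HasSum (fun k : ℕ => ((k : ℝ) + 1 - a) ^ 2 *
        (Real.exp (-a) * (a ^ (k + 2) / ((k + 2).factorial : ℝ))))
      (1 + a - Real.exp (-a) * (1 + 2 * a + a ^ 2 + a ^ 3)) := by
  have h := (((hasSum_poissonWeight a).mul_left (a ^ 2)).sub
    ((hasSum_poissonWeight_succ a).mul_left ((1 + 2 * a) * a))).add
    ((hasSum_poissonWeight_add_two a).mul_left ((1 + a) ^ 2))
  have hval : 1 + a - Real.exp (-a) * (1 + 2 * a + a ^ 2 + a ^ 3) =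
      a ^ 2 * 1 - (1 + 2 * a) * a * (1 - Real.exp (-a)) +
        (1 + a) ^ 2 * (1 - Real.exp (-a) * (1 + a)) := by
    ring
  rw [hval]
  convert! h using 2 with k
  have h0 : (k.factorial : ℝ) ≠ 0 := by positivity
  have e1 : ((k + 1).factorial : ℝ) = (k + 1) * k.factorial := by
    push_cast [Nat.factorial_succ]; ring
  have e2 : ((k + 2).factorial : ℝ) = (k + 2) * ((k + 1) * k.factorial) := by
    push_cast [Nat.factorial_succ]; ring
  rw [e1, e2]
  field_simp
  ring

lemma exists_abs_sub_le_add_mul_sq {g : ℝ → ℝ} {B r : ℝ} (hr : 0 ≤ r)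
    (hg : ContinuousWithinAt g (Set.Ici 0) r) (hB : ∀ z, 0 ≤ z → |g z| ≤ B)
    {ε : ℝ} (hε : 0 < ε) :
    ∃ C : ℝ, 0 ≤ C ∧ ∀ z, 0 ≤ z → |g z - g r| ≤ ε + C * (z - r) ^ 2 := by
  obtain ⟨δ, hδ, hd⟩ := Metric.continuousWithinAt_iff.1 hg ε hε
  have hB0 : 0 ≤ B := (abs_nonneg _).trans (hB r hr)
  refine ⟨2 * B / δ ^ 2, by positivity, fun z hz => ?_⟩
  by_cases hzr : |z - r| < δ
  · have h1 := hd (Set.mem_Ici.2 hz) (by rwa [Real.dist_eq])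
    rw [Real.dist_eq] at h1
    have : 0 ≤ 2 * B / δ ^ 2 * (z - r) ^ 2 := by positivity
    linarith
  · have h1 : δ ^ 2 ≤ (z - r) ^ 2 := by
      rw [← sq_abs (z - r)]
      exact pow_le_pow_left₀ hδ.le (not_lt.1 hzr) 2
    have h2 : 2 * B ≤ 2 * B / δ ^ 2 * (z - r) ^ 2 := by
      rw [div_mul_eq_mul_div, le_div_iff₀ (by positivity)]
      gcongr
    have h3 := abs_sub (g z) (g r)
    linarith [hB z hz, hB r hr]

/-- Poisson averages of a bounded function at scale `1 / N` converge at continuity points. -/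
lemma tendsto_tsum_mul_poissonWeight {g : ℝ → ℝ} {B r : ℝ} (hr : 0 < r)
    (hg : ContinuousWithinAt g (Set.Ici 0) r) (hB : ∀ z, 0 ≤ z → |g z| ≤ B) :
    Filter.Tendsto (fun N : ℕ => ∑' k : ℕ, g (((k : ℝ) + 1) / N) *
        (Real.exp (-(N * r)) * ((N * r) ^ (k + 2) / ((k + 2).factorial : ℝ))))
      Filter.atTop (nhds (g r)) := by
  have hN : Filter.Tendsto (fun N : ℕ => (N : ℝ) * r) Filter.atTop Filter.atTop :=
    tendsto_natCast_atTop_atTop.atTop_mul_const hr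
  have hmass : Filter.Tendsto
      (fun N : ℕ => g r * (1 - Real.exp (-(N * r)) * (1 + N * r)))
      Filter.atTop (nhds (g r)) := by
    have h0 := (Real.tendsto_pow_mul_exp_neg_atTop_nhds_zero 0).comp hN
    have h1 := (Real.tendsto_pow_mul_exp_neg_atTop_nhds_zero 1).comp hN
    have h2 := ((h0.add h1).const_sub 1).const_mul (g r)
    simp only [add_zero, sub_zero, mul_one] at h2
    refine h2.congr fun N => ?_
    simp only [Function.comp]
    ring
  rw [← tendsto_sub_nhds_zero_iff] at hmass ⊢
  suffices hdiff : Filter.Tendsto (fun N : ℕ => (∑' k : ℕ, g (((k : ℝ) + 1) / N) *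
        (Real.exp (-(N * r)) * ((N * r) ^ (k + 2) / ((k + 2).factorial : ℝ)))) -
        g r * (1 - Real.exp (-(N * r)) * (1 + N * r))) Filter.atTop (nhds 0) by
    simpa using hdiff.add hmass
  rw [Metric.tendsto_atTop']
  intro ε hε
  obtain ⟨C, hC, hgC⟩ := exists_abs_sub_le_add_mul_sq hr.le hg hB (half_pos hε)
  have hlim : Filter.Tendsto (fun N : ℕ => C * (1 / (N : ℝ) ^ 2 + r / N)) Filter.atTop
      (nhds 0) := by
    have h1 : Filter.Tendsto (fun N : ℕ => (1 : ℝ) / (N : ℝ) ^ 2) Filter.atTop (nhds 0) := by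
      have := tendsto_one_div_atTop_nhds_zero_nat (𝕜 := ℝ)
      simpa using this.pow 2
    simpa using (h1.add (tendsto_const_div_atTop_nhds_zero_nat r)).const_mul C
  obtain ⟨n, hn⟩ := Filter.eventually_atTop.1 (hlim.eventually (gt_mem_nhds (half_pos hε)))
  refine ⟨n, fun N hnN => ?_⟩
  have hNpos : (0 : ℝ) < N := by exact_mod_cast (Nat.zero_le n).trans_lt hnN
  set a : ℝ := N * r with ha
  have ha0 : 0 < a := by positivity
  have hmom := ((hasSum_poissonWeight_add_two a).mul_left (ε / 2)).add
    ((hasSum_poissonWeight_mul_sq a).mul_left (C / N ^ 2))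
  have hg_sum : Summable (fun k : ℕ => g (((k : ℝ) + 1) / N) *
        (Real.exp (-a) * (a ^ (k + 2) / ((k + 2).factorial : ℝ)))) := by
    refine Summable.of_norm_bounded
      ((hasSum_poissonWeight_add_two a).summable.mul_left B) fun k => ?_
    rw [norm_mul, Real.norm_of_nonneg (r := Real.exp (-a) * _) (by positivity)]
    gcongr
    exact hB _ (by positivity)
  have hdiff := hg_sum.hasSum.sub ((hasSum_poissonWeight_add_two a).mul_left (g r))
  rw [Real.dist_eq, sub_zero, ← hdiff.tsum_eq, ← Real.norm_eq_abs]
  refine (tsum_of_norm_bounded hmom fun k => ?_).trans_lt ?_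
  · rw [← sub_mul, norm_mul, Real.norm_of_nonneg (r := Real.exp (-a) * _) (by positivity),
      ← mul_assoc (C / _), ← add_mul]
    gcongr
    refine (hgC (((k : ℝ) + 1) / N) (by positivity)).trans (le_of_eq ?_)
    rw [ha]
    field_simp
  · have h1 : C / N ^ 2 * (1 + a) = C * (1 / (N : ℝ) ^ 2 + r / N) := by
      rw [ha]
      field_simp
    have h2 : C / N ^ 2 * (1 + a - Real.exp (-a) * (1 + 2 * a + a ^ 2 + a ^ 3)) ≤
        C / N ^ 2 * (1 + a) := by
      gcongr
      exact sub_le_self _ (by positivity)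
    have h3 : ε / 2 * (1 - Real.exp (-a) * (1 + a)) ≤ ε / 2 * 1 := by
      gcongr
      exact sub_le_self _ (by positivity)
    have h4 := hn N hnN.le
    linarith

/-- Under assumption (H), the finite measures
`π̄_N = ∑_{k≥1} ((k/N)² ∧ 1) w_{k,N} δ_{k/N}` converge weakly to `(z² ∧ 1) μ(dz)`:
for every bounded continuous `h : [0,∞) → ℝ`,
`∑_{k≥1} h(k/N) ((k/N)² ∧ 1) w_{k,N} → ∫ h(z)(z² ∧ 1) μ(dz)`. -/
theorem stmt14 (μ : Measure ℝ) [SigmaFinite μ]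
    (p : ℝ) (hp1 : 1 < p) (hp2 : p < 2)
    (hH : Integrable (fun r => max r (r ^ p)) (μ.restrict (Set.Ioi 0)))
    (w : ℕ → ℕ → ℝ)
    (hw : ∀ N k : ℕ, 1 ≤ N → 1 ≤ k → w N k =
      (1 / (Nat.factorial (k + 1) : ℝ)) *
        ∫ r in Set.Ioi (0:ℝ), ((N:ℝ) * r) ^ (k + 1) * Real.exp (-(N:ℝ) * r) ∂μ) :
    ∀ h : ℝ → ℝ, ContinuousOn h (Set.Ici 0) →
      (∃ B : ℝ, ∀ z : ℝ, 0 ≤ z → |h z| ≤ B) →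
      Filter.Tendsto
        (fun N : ℕ => ∑' k : ℕ,
          h (((k:ℝ) + 1) / N) * min ((((k:ℝ) + 1) / N) ^ 2) 1 * w N (k + 1))
        Filter.atTop (nhds (∫ z in Set.Ioi (0:ℝ), h z * min (z ^ 2) 1 ∂μ)) := by
  rintro h hcont ⟨B, hB⟩
  have hB0 : 0 ≤ B := (abs_nonneg _).trans (hB 0 le_rfl)
  set g : ℝ → ℝ := fun z => h z * min (z ^ 2) 1 with hg
  have hgcont : ContinuousOn g (Set.Ici 0) := hcont.mul (by fun_prop)
  have hgB : ∀ z, 0 ≤ z → |g z| ≤ B := fun z hz => by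
    rw [hg, abs_mul, abs_of_nonneg (a := min _ _) (by positivity)]
    exact (mul_le_of_le_one_right (abs_nonneg _) (min_le_right _ _)).trans (hB z hz)
  have hgz : ∀ z, 0 ≤ z → |g z| ≤ B * z := fun z hz => by
    rw [hg, abs_mul, abs_of_nonneg (a := min _ _) (by positivity)]
    refine mul_le_mul (hB z hz) ?_ (by positivity) hB0
    rcases le_total z 1 with h1 | h1
    · exact (min_le_left _ _).trans (by nlinarith)
    · exact (min_le_right _ _).trans h1
  have hid : Integrable (fun r : ℝ => r) (μ.restrict (Set.Ioi 0)) := by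
    refine hH.mono' measurable_id.aestronglyMeasurable ?_
    filter_upwards [ae_restrict_mem measurableSet_Ioi] with r hr
    rw [Real.norm_of_nonneg (le_of_lt hr)]
    exact le_max_left _ _
  set T : ℕ → ℕ → ℝ → ℝ := fun N k r => g (((k : ℝ) + 1) / N) *
        (Real.exp (-(N * r)) * ((N * r) ^ (k + 2) / ((k + 2).factorial : ℝ))) with hT
  have hTmeas : ∀ N k, Measurable (T N k) := fun N k => by
    rw [hT]
    fun_prop
  have hTbound : ∀ N : ℕ, 1 ≤ N → ∀ k : ℕ, ∀ r : ℝ, 0 < r → ‖T N k r‖ ≤ (B * r) *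
      (Real.exp (-(N * r)) * ((N * r) ^ (k + 1) / ((k + 1).factorial : ℝ))) := by
    intro N hN k r hr
    have hNpos : (0 : ℝ) < N := by exact_mod_cast hN
    rw [hT, norm_mul, Real.norm_of_nonneg (r := Real.exp _ * _) (by positivity)]
    calc |g (((k : ℝ) + 1) / N)| *
          (Real.exp (-(N * r)) * ((N * r) ^ (k + 2) / ((k + 2).factorial : ℝ)))
        ≤ (B * (((k : ℝ) + 2) / N)) *
          (Real.exp (-(N * r)) * ((N * r) ^ (k + 2) / ((k + 2).factorial : ℝ))) := by
          gcongr
          refine (hgz _ (by positivity)).trans ?_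
          gcongr
          norm_num
      _ = _ := by
          have e2 : ((k + 2).factorial : ℝ) = (k + 2) * (k + 1).factorial := by
            push_cast [Nat.factorial_succ]; ring
          rw [e2]
          field_simp
          ring
  have hbsum : ∀ (N : ℕ) (r : ℝ), HasSum (fun k : ℕ => (B * r) *
      (Real.exp (-(N * r)) * ((N * r) ^ (k + 1) / ((k + 1).factorial : ℝ))))
      ((B * r) * (1 - Real.exp (-(N * r)))) :=
    fun N r => (hasSum_poissonWeight_succ _).mul_left _
  have hbnorm : ∀ (N : ℕ) (r : ℝ), 0 < r → (B * r) * (1 - Real.exp (-(N * r))) ≤ B * r ∧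
      0 ≤ (B * r) * (1 - Real.exp (-(N * r))) := fun N r hr => by
    have h1 : Real.exp (-(N * r)) ≤ 1 := Real.exp_le_one_iff.2 (by
      have : 0 ≤ (N : ℝ) * r := by positivity
      linarith)
    exact ⟨mul_le_of_le_one_right (by positivity) (by linarith [Real.exp_pos (-(N * r))]),
      mul_nonneg (by positivity) (by linarith)⟩
  have hswap : ∀ N : ℕ, 1 ≤ N → HasSum (fun k => ∫ r in Set.Ioi (0:ℝ), T N k r ∂μ)
      (∫ r in Set.Ioi (0:ℝ), ∑' k, T N k r ∂μ) := by
    intro N hN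
    refine hasSum_integral_of_dominated_convergence
      (fun k r => (B * r) *
        (Real.exp (-(N * r)) * ((N * r) ^ (k + 1) / ((k + 1).factorial : ℝ))))
      (fun k => (hTmeas N k).aestronglyMeasurable) ?_ ?_ ?_ ?_
    · intro k
      filter_upwards [ae_restrict_mem measurableSet_Ioi] with r hr
      exact hTbound N hN k r hr
    · exact Filter.Eventually.of_forall fun r => (hbsum N r).summable
    · simp only [(hbsum N _).tsum_eq]
      refine (hid.const_mul B).mono' (by fun_prop) ?_
      filter_upwards [ae_restrict_mem measurableSet_Ioi] with r hr
      rw [Real.norm_of_nonneg (hbnorm N r hr).2]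
      exact (hbnorm N r hr).1
    · filter_upwards [ae_restrict_mem measurableSet_Ioi] with r hr
      exact (Summable.of_norm_bounded (hbsum N r).summable
        fun k => hTbound N hN k r hr).hasSum
  have hlim : Filter.Tendsto (fun N : ℕ => ∫ r in Set.Ioi (0:ℝ), ∑' k, T N k r ∂μ)
      Filter.atTop (nhds (∫ z in Set.Ioi (0:ℝ), g z ∂μ)) := by
    refine tendsto_integral_filter_of_dominated_convergence (fun r => B * r) ?_ ?_
      (hid.const_mul B) ?_
    · filter_upwards [Filter.eventually_ge_atTop 1] with N hN
      refine aestronglyMeasurable_of_tendsto_ae Filter.atTop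
        (f := fun n r => ∑ k ∈ Finset.range n, T N k r)
        (fun n => (Finset.measurable_fun_sum _ fun k _ => hTmeas N k).aestronglyMeasurable) ?_
      filter_upwards [ae_restrict_mem measurableSet_Ioi] with r hr
      exact (Summable.of_norm_bounded (hbsum N r).summable
        fun k => hTbound N hN k r hr).hasSum.tendsto_sum_nat
    · filter_upwards [Filter.eventually_ge_atTop 1] with N hN
      filter_upwards [ae_restrict_mem measurableSet_Ioi] with r hr
      exact (tsum_of_norm_bounded (hbsum N r) fun k => hTbound N hN k r hr).trans
        (hbnorm N r hr).1
    · filter_upwards [ae_restrict_mem measurableSet_Ioi] with r hr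
      exact tendsto_tsum_mul_poissonWeight hr (hgcont r (Set.Ioi_subset_Ici_self hr)) hgB
  refine hlim.congr' ?_
  filter_upwards [Filter.eventually_ge_atTop 1] with N hN
  rw [← (hswap N hN).tsum_eq]
  refine tsum_congr fun k => ?_
  rw [hw N (k + 1) hN (Nat.le_add_left 1 k), hT, integral_const_mul, ← integral_const_mul (1 / _)]
  congr 1
  refine integral_congr_ae (Filter.Eventually.of_forall fun r => ?_)
  simp only [neg_mul]
  ring
end

section
/- Let μ be a σ-finite measure on (0,∞) satisfying assumption (H) with exponent p ∈ (1,2), with μ((0,1)) > 0 and μ((1,∞)) > 0, and N ≥ 1 an integer. With the quantities α_{−,N}, q_0^{−,N}, α_{+,N}, q_k^{+,N}, p_k^{+,N}, d_{1,N}, q_0^{1,N}, γ_{1,N} defined in the context, let Γ_N^+, ε̂_N, and Ξ be independent random variables where Γ_N^+ takes values in the positive integers with P(Γ_N^+ = k) = p_k^{+,N}, ε̂_N ∈ {0,1} with P(ε̂_N = 1) = α_{+,N}(1 − q_0^{+,N})/γ_{1,N}, and Ξ has the standard exponential distribution. Set T^{N,+} = Γ_N^+ 𝟙{ε̂_N =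 1} − Ξ · E[Γ_N^+ 𝟙{ε̂_N = 1}]. Then there exists a constant C₁ (depending only on p and μ) such that for all N ≥ 1, E[|T^{N,+}|^p] ≤ C₁ N^{p−1} / γ_{1,N}. -/
open MeasureTheory

/-- Weighted exponential series bound: `E[(X - 1)₊ ^ p] ≤ 2 x ^ p` for `X` Poisson with mean `x`. -/
lemma tsum_rpow_mul_poisson_le {p x : ℝ} (hp0 : 0 < p) (hp2 : p < 2) (hx : 0 < x) :
    ∑' k : ℕ, ENNReal.ofReal ((k : ℝ) ^ p * (x ^ (k + 1) * Real.exp (-x) / (k + 1).factorial))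
      ≤ ENNReal.ofReal (2 * x ^ p) := by
  have h0 : HasSum (fun n : ℕ => x ^ n / n.factorial) (Real.exp x) := by
    rw [Real.exp_eq_exp_ℝ]; exact NormedSpace.expSeries_div_hasSum_exp x
  have h1 : HasSum (fun k : ℕ => x ^ (k + 1) / (k + 1).factorial) (Real.exp x - 1) := by
    have := (hasSum_nat_add_iff' 1).mpr h0
    simpa using this
  have h2 : HasSum (fun k : ℕ => (k : ℝ) * (k + 1) * (x ^ (k + 1) / (k + 1).factorial))
      (x ^ 2 * Real.exp x) := by
    rw [← hasSum_nat_add_iff' 1]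
    simp only [Finset.range_one, Finset.sum_singleton, Nat.cast_zero, zero_mul, sub_zero]
    have hterm : ∀ k : ℕ, ((k + 1 : ℕ) : ℝ) * ((k + 1 : ℕ) + 1) *
        (x ^ (k + 1 + 1) / (k + 1 + 1).factorial) = x ^ 2 * (x ^ k / k.factorial) := by
      intro k
      rw [Nat.factorial_succ, Nat.factorial_succ]
      push_cast
      have : (k.factorial : ℝ) ≠ 0 := by positivity
      field_simp
      ring
    simpa only [hterm] using h0.mul_left (x ^ 2)
  have h3 := (h1.mul_left (x ^ p * Real.exp (-x))).add
    (h2.mul_left (x ^ (p - 2) * Real.exp (-x)))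
  have hle : x ^ p * Real.exp (-x) * (Real.exp x - 1) +
      x ^ (p - 2) * Real.exp (-x) * (x ^ 2 * Real.exp x) ≤ 2 * x ^ p := by
    have e1 : Real.exp (-x) * Real.exp x = 1 := by rw [← Real.exp_add]; simp
    have e2 : x ^ (p - 2) * x ^ 2 = x ^ p := by
      rw [← Real.rpow_natCast, ← Real.rpow_add hx]; norm_num
    have : 0 < x ^ p * Real.exp (-x) := by positivity
    calc _ = x ^ p * (Real.exp (-x) * Real.exp x) - x ^ p * Real.exp (-x) +
          (x ^ (p - 2) * x ^ 2) * (Real.exp (-x) * Real.exp x) := by ring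
      _ ≤ _ := by rw [e1, e2]; linarith
  refine le_trans ?_ (ENNReal.ofReal_le_ofReal hle)
  rw [← h3.tsum_eq, ENNReal.ofReal_tsum_of_nonneg (fun k => by positivity) h3.summable]
  refine ENNReal.tsum_le_tsum fun k => ENNReal.ofReal_le_ofReal ?_
  have hk : (k : ℝ) ^ p ≤ x ^ p + x ^ (p - 2) * (k * (k + 1)) := by
    rcases le_or_gt (k : ℝ) x with h | h
    · have := Real.rpow_le_rpow (Nat.cast_nonneg k) h hp0.le
      have : 0 ≤ x ^ (p - 2) * (k * (k + 1)) := by positivity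
      linarith
    · have hk0 : (0 : ℝ) < k := hx.trans h
      have a1 : (k : ℝ) ^ (p - 2) ≤ x ^ (p - 2) :=
        Real.rpow_le_rpow_of_nonpos hx h.le (by linarith)
      have a2 : (k : ℝ) ^ p = (k : ℝ) ^ (p - 2) * (k * k) := by
        rw [← pow_two, ← Real.rpow_natCast, ← Real.rpow_add hk0]; norm_num
      rw [a2]
      have : (k : ℝ) ^ (p - 2) * (k * k) ≤ x ^ (p - 2) * (k * (k + 1)) := by
        gcongr; linarith
      have : 0 < x ^ p := by positivity
      linarith
  calc _ ≤ (x ^ p + x ^ (p - 2) * (k * (k + 1))) *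
        (x ^ (k + 1) * Real.exp (-x) / (k + 1).factorial) := by gcongr
    _ = _ := by ring

/-- Absolute moments of a random variable with standard exponential tails. -/
lemma lintegral_enorm_rpow_of_exp_tail {Ω : Type*} [MeasurableSpace Ω] {P : Measure Ω}
    [IsProbabilityMeasure P] {X : Ω → ℝ} (hX : Measurable X) {p : ℝ} (hp : 0 < p)
    (h : ∀ t : ℝ, 0 ≤ t → P {ω | t < X ω} = ENNReal.ofReal (Real.exp (-t))) :
    ∫⁻ ω, ‖X ω‖ₑ ^ p ∂P = ENNReal.ofReal (p * Real.Gamma p) := by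
  have hpos : ∀ᵐ ω ∂P, 0 < X ω := by
    exact (prob_compl_eq_zero_iff (μ := P) (measurableSet_lt measurable_const hX)).mpr
      (by simpa using h 0 le_rfl)
  have e : ∫⁻ ω, ‖X ω‖ₑ ^ p ∂P = ∫⁻ ω, ENNReal.ofReal (X ω ^ p) ∂P := by
    refine lintegral_congr_ae ?_
    filter_upwards [hpos] with ω hω
    rw [Real.enorm_eq_ofReal hω.le, ENNReal.ofReal_rpow_of_pos hω]
  rw [e, lintegral_rpow_eq_lintegral_meas_lt_mul P (hpos.mono fun _ h => h.le) hX.aemeasurable hp,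
    ENNReal.ofReal_mul hp.le, Real.Gamma_eq_integral hp,
    ofReal_integral_eq_lintegral_ofReal (Real.GammaIntegral_convergent hp)]
  · congr 1
    refine setLIntegral_congr_fun measurableSet_Ioi fun t ht => ?_
    rw [h t (le_of_lt ht), ENNReal.ofReal_mul (Real.exp_pos _).le]
  · filter_upwards [ae_restrict_mem measurableSet_Ioi] with t ht
    have : (0 : ℝ) < t := ht
    positivity

/-- `L^p` bound for a variable compensated by a random multiple of its mean. -/
lemma integral_abs_sub_mul_integral_rpow_le {Ω : Type*} [MeasurableSpace Ω] {P : Measure Ω}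
    [IsProbabilityMeasure P] {W X : Ω → ℝ} (hW : Measurable W) (hX : Measurable X)
    {p A B : ℝ} (hp : 1 ≤ p) (hA : 0 ≤ A) (hB : 0 ≤ B)
    (hWA : ∫⁻ ω, ‖W ω‖ₑ ^ p ∂P ≤ ENNReal.ofReal A)
    (hXB : ∫⁻ ω, ‖X ω‖ₑ ^ p ∂P ≤ ENNReal.ofReal B) :
    ∫ ω, |W ω - X ω * ∫ ω', W ω' ∂P| ^ p ∂P ≤ 2 ^ (p - 1) * (A + B * A) := by
  have hp0 : 0 < p := by linarith
  set e := ∫ ω', W ω' ∂P with he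
  have hemean : ‖e‖ₑ ^ p ≤ ENNReal.ofReal A := by
    refine le_trans ?_ hWA
    have h1 : ‖e‖ₑ ≤ eLpNorm' W 1 P := by
      simpa [eLpNorm'] using enorm_integral_le_lintegral_enorm (μ := P) W
    have h2 := h1.trans (eLpNorm'_le_eLpNorm'_of_exponent_le one_pos hp P
      hW.aestronglyMeasurable)
    calc _ ≤ (eLpNorm' W p P) ^ p := ENNReal.rpow_le_rpow h2 hp0.le
      _ = _ := by
        rw [eLpNorm', ← ENNReal.rpow_mul, one_div_mul_cancel hp0.ne', ENNReal.rpow_one]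
  have hT : ∫⁻ ω, ENNReal.ofReal (|W ω - X ω * e| ^ p) ∂P ≤
      ENNReal.ofReal (2 ^ (p - 1) * (A + B * A)) := by
    calc _ ≤ ∫⁻ ω, 2 ^ (p - 1) * (‖W ω‖ₑ ^ p + ‖X ω‖ₑ ^ p * ‖e‖ₑ ^ p) ∂P := by
          refine lintegral_mono fun ω => ?_
          rw [← ENNReal.ofReal_rpow_of_nonneg (abs_nonneg _) hp0.le,
            ← Real.enorm_eq_ofReal_abs, ← ENNReal.mul_rpow_of_nonneg _ _ hp0.le, ← enorm_mul]
          exact (ENNReal.rpow_le_rpow enorm_sub_le hp0.le).trans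
            (ENNReal.rpow_add_le_mul_rpow_add_rpow _ _ hp)
      _ = 2 ^ (p - 1) * (∫⁻ ω, ‖W ω‖ₑ ^ p ∂P + (∫⁻ ω, ‖X ω‖ₑ ^ p ∂P) * ‖e‖ₑ ^ p) := by
          rw [lintegral_const_mul _ (by fun_prop), lintegral_add_left (by fun_prop),
            lintegral_mul_const _ (by fun_prop)]
      _ ≤ 2 ^ (p - 1) * (ENNReal.ofReal A + ENNReal.ofReal B * ENNReal.ofReal A) := by gcongr
      _ = _ := by
          rw [ENNReal.ofReal_mul (by positivity), ENNReal.ofReal_add hA (by positivity),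
            ENNReal.ofReal_mul hB, ← ENNReal.ofReal_rpow_of_pos two_pos]
          simp
  rw [integral_eq_lintegral_of_nonneg_ae (.of_forall fun ω => by positivity)
    (Measurable.aestronglyMeasurable (by fun_prop))]
  exact ENNReal.toReal_le_of_le_ofReal (by positivity) hT

/-- Moments of `Γ 𝟙{ε = 1}` for independent `ℕ`-valued `Γ` and `ε`. -/
lemma lintegral_enorm_ite_rpow_eq_tsum {Ω : Type*} [MeasurableSpace Ω] {P : Measure Ω}
    {Γ ε : Ω → ℕ} (hΓ : Measurable Γ) (hε : Measurable ε) {p : ℝ} (hp : 0 < p)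
    (h : ∀ A B : Set ℕ, P (Γ ⁻¹' A ∩ ε ⁻¹' B) = P (Γ ⁻¹' A) * P (ε ⁻¹' B)) :
    ∫⁻ ω, ‖(if ε ω = 1 then (Γ ω : ℝ) else 0)‖ₑ ^ p ∂P =
      ∑' k : ℕ, ENNReal.ofReal ((k : ℝ) ^ p) * (P {ω | Γ ω = k} * P {ω | ε ω = 1}) := by
  have hm : ∀ k : ℕ, MeasurableSet (Γ ⁻¹' {k} ∩ ε ⁻¹' {1}) := fun k =>
    (hΓ (measurableSet_singleton k)).inter (hε (measurableSet_singleton 1))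
  calc _ = ∫⁻ ω, ∑' k : ℕ, (Γ ⁻¹' {k} ∩ ε ⁻¹' {1}).indicator
        (fun _ => ENNReal.ofReal ((k : ℝ) ^ p)) ω ∂P := by
        refine lintegral_congr fun ω => ?_
        rw [tsum_eq_single (Γ ω)]
        · by_cases hω : ε ω = 1
          · simp [hω, ← ENNReal.ofReal_rpow_of_nonneg, hp.le]
          · simp [hω, hp]
        · intro k hk
          simp [hk.symm]
    _ = _ := by
        rw [lintegral_tsum fun k => (measurable_const.indicator (hm k)).aemeasurable]
        refine tsum_congr fun k => ?_
        rw [lintegral_indicator_const (hm k), h]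
        rfl

/-- `p`-th moment bound `E[|T^{N,+}|^p] ≤ C₁ N^{p-1} / γ_{1,N}` for
`T^{N,+} = Γ_N^+ 𝟙{ε̂_N = 1} - Ξ E[Γ_N^+ 𝟙{ε̂_N = 1}]`, where `Γ_N^+`, `ε̂_N`, `Ξ` are
independent, `Γ_N^+` has law `p^{+,N}` on the positive integers,
`P(ε̂_N = 1) = α_{+,N}(1 - q_0^{+,N})/γ_{1,N}`, and `Ξ` is standard exponential;
the constant `C₁` depends only on `p` and `μ`. -/
theorem stmt17 (μ : Measure ℝ) [SigmaFinite μ]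
    (p : ℝ) (hp1 : 1 < p) (hp2 : p < 2)
    (hH : Integrable (fun r => max r (r ^ p)) (μ.restrict (Set.Ioi 0)))
    (hμ01 : μ (Set.Ioc 0 1) ≠ 0) (hμ1 : μ (Set.Ioi 1) ≠ 0) :
    ∃ C₁ : ℝ, 0 < C₁ ∧
      ∀ N : ℕ, 1 ≤ N →
      ∀ (Lval αm αp d1N q0p q01 γ1N : ℝ) (qp pp : ℕ → ℝ),
        Lval = (∫ r in Set.Ioi (0:ℝ), (Real.exp (-(N:ℝ) * r) - 1 + N * r) ∂μ) →
        αm = (∫ r in Set.Ioc (0:ℝ) 1, r * (1 - Real.exp (-(N:ℝ) * r)) ∂μ) →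
        αp = (∫ r in Set.Ioi (1:ℝ), r * (1 - Real.exp (-(N:ℝ) * r)) ∂μ) →
        0 < αm → 0 < αp →
        d1N = αm + αp →
        q0p = (1 / ((N:ℝ) * αp)) *
          ∫ r in Set.Ioi (1:ℝ), (Real.exp (-(N:ℝ) * r) - 1 + N * r) ∂μ →
        q0p < 1 →
        q01 = Lval / ((N:ℝ) * d1N) →
        γ1N = d1N * (1 - q01) → 0 < γ1N →
        qp 0 = q0p → qp 1 = 0 →
        (∀ k : ℕ, 2 ≤ k → qp k = (1 / ((Nat.factorial k : ℝ) * N * αp)) *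
          ∫ r in Set.Ioi (1:ℝ), ((N:ℝ) * r) ^ k * Real.exp (-(N:ℝ) * r) ∂μ) →
        (∀ k : ℕ, 1 ≤ k → pp k = qp (k + 1) / (1 - q0p)) →
        ∀ (Ω : Type) [MeasurableSpace Ω] (P : Measure Ω) [IsProbabilityMeasure P]
          (Γ : Ω → ℕ) (eps : Ω → ℕ) (Xi : Ω → ℝ),
          Measurable Γ → Measurable eps → Measurable Xi →
          (∀ ω, 1 ≤ Γ ω) →
          (∀ k : ℕ, 1 ≤ k → P {ω | Γ ω = k} = ENNReal.ofReal (pp k)) →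
          (∀ ω, eps ω ≤ 1) →
          P {ω | eps ω = 1} = ENNReal.ofReal (αp * (1 - q0p) / γ1N) →
          (∀ t : ℝ, 0 ≤ t → P {ω | t < Xi ω} = ENNReal.ofReal (Real.exp (-t))) →
          (∀ (A B : Set ℕ) (S : Set ℝ), MeasurableSet S →
            P (Γ ⁻¹' A ∩ eps ⁻¹' B ∩ Xi ⁻¹' S) =
              P (Γ ⁻¹' A) * P (eps ⁻¹' B) * P (Xi ⁻¹' S)) →
          (∫ ω, |(if eps ω = 1 then (Γ ω : ℝ) else 0) -
              Xi ω * ∫ ω', (if eps ω' = 1 then (Γ ω' : ℝ) else 0) ∂P| ^ p ∂P)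
            ≤ C₁ * (N:ℝ) ^ (p - 1) / γ1N := by
  have hp0 : 0 < p := by linarith
  set M := ∫ r in Set.Ioi (0 : ℝ), max r (r ^ p) ∂μ with hM
  have hM0 : 0 ≤ M := setIntegral_nonneg measurableSet_Ioi fun r hr => le_max_of_le_left (le_of_lt hr)
  have hG : 0 < Real.Gamma p := Real.Gamma_pos_of_pos hp0
  have hMlin : ∫⁻ r in Set.Ioi (1 : ℝ), ENNReal.ofReal (r ^ p) ∂μ ≤ ENNReal.ofReal M := by
    rw [hM, ofReal_integral_eq_lintegral_ofReal hH (by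
      filter_upwards [ae_restrict_mem measurableSet_Ioi] with r hr
      exact le_max_of_le_left (le_of_lt hr))]
    exact (lintegral_mono_set (Set.Ioi_subset_Ioi zero_le_one)).trans
      (lintegral_mono fun r => ENNReal.ofReal_le_ofReal (le_max_right _ _))
  refine ⟨2 ^ (p - 1) * ((1 + p * Real.Gamma p) * (2 * M)) + 1, by positivity, ?_⟩
  intro N hN Lval αm αp d1N q0p q01 γ1N qp pp _ _ _ _ hαp _ _ hq0p _ _ hγ _ _ hqp hpp
    Ω _ P _ Γ eps Xi hΓm hem hXm hΓ1 hΓ _ heps hXi hind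
  have hN0 : (0 : ℝ) < N := by exact_mod_cast hN
  have hmom : ∫⁻ ω, ‖(if eps ω = 1 then (Γ ω : ℝ) else 0)‖ₑ ^ p ∂P ≤
      ENNReal.ofReal (2 * M * (N : ℝ) ^ (p - 1) / γ1N) := by
    rw [lintegral_enorm_ite_rpow_eq_tsum hΓm hem hp0 fun A B => by
      simpa using hind A B Set.univ MeasurableSet.univ]
    have hterm : ∀ k : ℕ, ENNReal.ofReal ((k : ℝ) ^ p) * (P {ω | Γ ω = k} * P {ω | eps ω = 1}) ≤
        ENNReal.ofReal (1 / (N * γ1N)) * ∫⁻ r in Set.Ioi (1 : ℝ), ENNReal.ofReal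
          ((k : ℝ) ^ p * ((N * r) ^ (k + 1) * Real.exp (-(N * r)) / (k + 1).factorial)) ∂μ := by
      intro k
      rcases Nat.eq_zero_or_pos k with rfl | hk
      · simp [hp0.ne']
      have hint : ENNReal.ofReal
          (∫ r in Set.Ioi (1 : ℝ), ((N : ℝ) * r) ^ (k + 1) * Real.exp (-(N : ℝ) * r) ∂μ) ≤
          ∫⁻ r in Set.Ioi (1 : ℝ), ENNReal.ofReal
            (((N : ℝ) * r) ^ (k + 1) * Real.exp (-(N : ℝ) * r)) ∂μ := by
        rw [integral_eq_lintegral_of_nonneg_ae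
          (by
            filter_upwards [ae_restrict_mem measurableSet_Ioi] with r hr
            have : (0 : ℝ) < r := zero_lt_one.trans hr
            positivity)
          (Measurable.aestronglyMeasurable (by fun_prop))]
        exact ENNReal.ofReal_toReal_le
      have hq : 0 < 1 - q0p := by linarith
      rw [hΓ k hk, heps, ← ENNReal.ofReal_mul' (by positivity),
        ← ENNReal.ofReal_mul (by positivity), hpp k hk, hqp (k + 1) (by omega)]
      calc _ = ENNReal.ofReal (1 / (N * γ1N)) * (ENNReal.ofReal
            ((k : ℝ) ^ p / (k + 1).factorial) * ENNReal.ofReal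
            (∫ r in Set.Ioi (1 : ℝ), ((N : ℝ) * r) ^ (k + 1) * Real.exp (-(N : ℝ) * r) ∂μ)) := by
            rw [← ENNReal.ofReal_mul (by positivity), ← ENNReal.ofReal_mul (by positivity)]
            congr 1
            field_simp
        _ ≤ _ := by
            refine (mul_le_mul_right (mul_le_mul_right hint _) _).trans_eq ?_
            rw [← lintegral_const_mul _ (by fun_prop)]
            congr 1
            refine lintegral_congr fun r => ?_
            rw [← ENNReal.ofReal_mul (by positivity)]
            congr 1
            rw [neg_mul]
            ring
    calc _ ≤ ∑' k : ℕ, ENNReal.ofReal (1 / (N * γ1N)) * ∫⁻ r in Set.Ioi (1 : ℝ), ENNReal.ofReal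
          ((k : ℝ) ^ p * ((N * r) ^ (k + 1) * Real.exp (-(N * r)) / (k + 1).factorial)) ∂μ :=
          ENNReal.tsum_le_tsum hterm
      _ = ENNReal.ofReal (1 / (N * γ1N)) * ∫⁻ r in Set.Ioi (1 : ℝ), ∑' k : ℕ, ENNReal.ofReal
          ((k : ℝ) ^ p * ((N * r) ^ (k + 1) * Real.exp (-(N * r)) / (k + 1).factorial)) ∂μ := by
          rw [ENNReal.tsum_mul_left, lintegral_tsum fun k => by fun_prop]
      _ ≤ ENNReal.ofReal (1 / (N * γ1N)) * ∫⁻ r in Set.Ioi (1 : ℝ),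
          ENNReal.ofReal (2 * (N : ℝ) ^ p) * ENNReal.ofReal (r ^ p) ∂μ := by
          refine mul_le_mul_right (setLIntegral_mono' measurableSet_Ioi fun r hr => ?_) _
          have hr0 : (0 : ℝ) < r := zero_lt_one.trans hr
          refine (tsum_rpow_mul_poisson_le hp0 hp2 (mul_pos hN0 hr0)).trans_eq ?_
          rw [← ENNReal.ofReal_mul (by positivity), Real.mul_rpow hN0.le hr0.le, mul_assoc]
      _ ≤ ENNReal.ofReal (1 / (N * γ1N)) *
          (ENNReal.ofReal (2 * (N : ℝ) ^ p) * ENNReal.ofReal M) := by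
          rw [lintegral_const_mul _ (by fun_prop)]
          gcongr
      _ = _ := by
          rw [← ENNReal.ofReal_mul (by positivity), ← ENNReal.ofReal_mul (by positivity),
            Real.rpow_sub_one hN0.ne']
          congr 1
          field_simp
  refine (integral_abs_sub_mul_integral_rpow_le (Measurable.ite (hem (measurableSet_singleton 1))
    (by fun_prop) measurable_const) hXm hp1.le (by positivity) (by positivity) hmom
    (lintegral_enorm_rpow_of_exp_tail hXm hp0 hXi).le).trans ?_
  have : 0 ≤ (N : ℝ) ^ (p - 1) / γ1N := by positivity
  calc _ = 2 ^ (p - 1) * ((1 + p * Real.Gamma p) * (2 * M)) * ((N : ℝ) ^ (p - 1) / γ1N) := by ring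
    _ ≤ (2 ^ (p - 1) * ((1 + p * Real.Gamma p) * (2 * M)) + 1) * ((N : ℝ) ^ (p - 1) / γ1N) := by
        gcongr
        linarith
    _ = _ := by ring
end

section
/- Let (Ω, F, P) be a probability space with a filtration (G_s)_{s≥0}, and let N_1, …, N_k be stochastic processes such that each N_i is adapted, ℕ-valued, nondecreasing, right-continuous with left limits, N_i(0) = 0, all jumps of each N_i are of size 1, and no two of the processes jump at the same time (equivalently, s ↦ ∑_{i=1}^k N_i(s) also has all jumps of size 1). Suppose there are constants C_1, …, C_k ≥ 0 such that for each i the process M_i(s) = N_i(s) − C_i s is a (G_s)-martingale. Then for all 0 ≤ r < s and all α_1, …, α_k ≥ 0, E[ exp(−∑_{i=1}^k α_i (N_i(s) − N_i(r))) | G_r ] = ∏_{i=1}^k exp(−C_i (s − r)(1 − e^{−α_i})) almost surely; consequently N_1, …, N_k are mutually independent Poisson processes with respective intensities C_1, …, C_k. -/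
open MeasureTheory ProbabilityTheory

/-- A nondecreasing `ℕ`-valued function of time has all jumps of size (at most) one:
at every positive time `s`, its value exceeds its left limit `⨆_{t < s} f t` by at
most `1`. (For a counting process, a jump, when it occurs, then has size exactly 1.) -/
def UnitJumps (f : NNReal → ℕ) : Prop :=
  ∀ s : NNReal, 0 < s → f s ≤ (⨆ t : {t : NNReal // t < s}, f t.1) + 1

open Filter Topology

/-- On a compact set of times, a right-continuous monotone `ℕ`-valued function with unit jumps
increases by at most one over all sufficiently short intervals. -/
lemma UnitJumps.exists_forall_dist_lt_le_add_one {f : NNReal → ℕ} (hf : UnitJumps f)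
    (hmono : Monotone f) (hrc : ∀ s, ∀ᶠ t in 𝓝[≥] s, f t = f s) {K : Set NNReal}
    (hK : IsCompact K) :
    ∃ δ > 0, ∀ x ∈ K, ∀ y, dist y x < δ → f y ≤ f x + 1 := by
  have key : ∀ u, ∃ U ∈ 𝓝 u, ∀ x ∈ U, ∀ y ∈ U, f y ≤ f x + 1 := by
    intro u
    have hright : ∀ᶠ t in 𝓝 u, f t ≤ f u := by
      filter_upwards [eventually_nhdsWithin_iff.1 (hrc u)] with t ht
      rcases le_total u t with h | h
      · exact (ht h).le
      · exact hmono h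
    have hleft : ∀ᶠ t in 𝓝 u, f u ≤ f t + 1 := by
      rcases eq_or_ne u 0 with rfl | hu
      · exact Eventually.of_forall fun t => (hmono (zero_le : 0 ≤ t)).trans (Nat.le_succ _)
      · have hu : 0 < u := pos_iff_ne_zero.2 hu
        have : Nonempty {t : NNReal // t < u} := ⟨⟨0, hu⟩⟩
        have hbdd : BddAbove (Set.range fun t : {t : NNReal // t < u} => f t.1) :=
          ⟨f u, by rintro _ ⟨t, rfl⟩; exact hmono t.2.le⟩
        obtain ⟨⟨t₀, ht₀⟩, h⟩ := Nat.sSup_mem (Set.range_nonempty _) hbdd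
        have hle : f u ≤ f t₀ + 1 := by
          have := hf u hu
          rw [iSup, ← h] at this
          exact this
        filter_upwards [lt_mem_nhds ht₀] with t ht
        exact hle.trans (Nat.add_le_add_right (hmono (le_of_lt ht)) 1)
    exact ⟨_, hright.and hleft, fun x hx y hy => hy.1.trans hx.2⟩
  choose U hU hUf using key
  obtain ⟨δ, hδ, h⟩ := lebesgue_number_lemma_of_metric (c := fun u => interior (U u)) hK
    (fun u => isOpen_interior)
    (fun x _ => Set.mem_iUnion.2 ⟨x, mem_interior_iff_mem_nhds.2 (hU x)⟩)
  refine ⟨δ, hδ, fun x hx y hy => ?_⟩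
  obtain ⟨u, hu⟩ := h x hx
  exact hUf u x (interior_subset (hu (Metric.mem_ball_self hδ))) y
    (interior_subset (hu (Metric.mem_ball.2 hy)))

/-- The increments of a martingale are orthogonal to bounded functions measurable with respect
to the past. -/
lemma integral_mul_martingale_increment_eq_zero {Ω ι : Type*} [Preorder ι]
    {mΩ : MeasurableSpace Ω} {P : Measure Ω} [IsFiniteMeasure P] {𝓕 : Filtration ι mΩ}
    {M : ι → Ω → ℝ} (hM : Martingale M 𝓕 P) {a b : ι} (hab : a ≤ b) {Z : Ω → ℝ}
    (hZ : StronglyMeasurable[𝓕 a] Z) {c : ℝ} (hc : ∀ ω, |Z ω| ≤ c) :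
    ∫ ω, Z ω * (M b ω - M a ω) ∂P = 0 := by
  have hint : Integrable (M b - M a) P := (hM.integrable b).sub (hM.integrable a)
  have hmul : Integrable (Z * (M b - M a)) P :=
    hint.bdd_mul (hZ.mono (𝓕.le a)).aestronglyMeasurable (Eventually.of_forall hc)
  have h0 : P[M b - M a | 𝓕 a] =ᵐ[P] 0 := by
    filter_upwards [condExp_sub (hM.integrable b) (hM.integrable a) (𝓕 a),
      hM.condExp_ae_eq hab, hM.condExp_ae_eq (le_refl a)] with ω h1 h2 h3
    rw [h1, Pi.sub_apply, h2, h3, sub_self, Pi.zero_apply]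
  have h1 : P[Z * (M b - M a) | 𝓕 a] =ᵐ[P] 0 := by
    filter_upwards [condExp_mul_of_stronglyMeasurable_left hZ hmul hint, h0] with ω h1 h2
    rw [h1, Pi.mul_apply, h2, Pi.zero_apply, mul_zero]
  calc ∫ ω, Z ω * (M b ω - M a ω) ∂P = ∫ ω, (P[Z * (M b - M a) | 𝓕 a]) ω ∂P :=
        (integral_condExp (𝓕.le a)).symm
    _ = 0 := by rw [integral_congr_ae h1]; simp

/-- The difference between `exp (-∑ αᵢ dᵢ)` and its affine interpolation from `∑ dᵢ ≤ 1`. -/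
noncomputable def expLinError {ι : Type*} [Fintype ι] (α : ι → ℝ) (d : ι → ℕ) : ℝ :=
  Real.exp (-∑ i, α i * d i) - 1 + ∑ i, (1 - Real.exp (-α i)) * d i

lemma abs_expLinError_le {ι : Type*} [Fintype ι] {α : ι → ℝ} (hα : ∀ i, 0 ≤ α i) (d : ι → ℕ) :
    |expLinError α d| ≤ ((∑ i, d i : ℕ) : ℝ) := by
  have hsum0 : 0 ≤ ∑ i, (1 - Real.exp (-α i)) * (d i : ℝ) :=
    Finset.sum_nonneg fun i _ => mul_nonneg
      (sub_nonneg.2 (Real.exp_le_one_iff.2 (neg_nonpos.2 (hα i)))) (Nat.cast_nonneg _)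
  have hsum1 : ∑ i, (1 - Real.exp (-α i)) * (d i : ℝ) ≤ ((∑ i, d i : ℕ) : ℝ) := by
    rw [Nat.cast_sum]
    refine Finset.sum_le_sum fun i _ => mul_le_of_le_one_left (Nat.cast_nonneg _) ?_
    linarith [Real.exp_pos (-α i)]
  have hexp1 : Real.exp (-∑ i, α i * (d i : ℝ)) ≤ 1 :=
    Real.exp_le_one_iff.2 (neg_nonpos.2
      (Finset.sum_nonneg fun i _ => mul_nonneg (hα i) (Nat.cast_nonneg _)))
  have hexp2 : 1 - Real.exp (-∑ i, α i * (d i : ℝ)) ≤ ((∑ i, d i : ℕ) : ℝ) := by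
    rcases Nat.eq_zero_or_pos (∑ i, d i) with h | h
    · have hd : ∀ i, d i = 0 := fun i => Finset.sum_eq_zero_iff.1 h i (Finset.mem_univ i)
      simp [hd]
    · have : (1 : ℝ) ≤ ((∑ i, d i : ℕ) : ℝ) := by exact_mod_cast h
      linarith [Real.exp_pos (-∑ i, α i * (d i : ℝ))]
  rw [expLinError, abs_le]
  constructor <;> linarith

lemma expLinError_eq_zero {ι : Type*} [Fintype ι] (α : ι → ℝ) {d : ι → ℕ}
    (hd : ∑ i, d i ≤ 1) : expLinError α d = 0 := by
  classical
  by_cases h : ∀ i, d i = 0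
  · simp [expLinError, h]
  push Not at h
  obtain ⟨i, hi⟩ := h
  have hsplit := Finset.add_sum_erase Finset.univ d (Finset.mem_univ i)
  have hi1 : d i = 1 := by omega
  have h0 : ∀ j, j ≠ i → d j = 0 := fun j hj =>
    Finset.sum_eq_zero_iff.1 (by omega : ∑ x ∈ Finset.univ.erase i, d x = 0) j
      (Finset.mem_erase.2 ⟨hj, Finset.mem_univ j⟩)
  have hs : ∀ c : ι → ℝ, ∑ j, c j * (d j : ℝ) = c i := fun c => by
    rw [Finset.sum_eq_single i (fun j _ hj => by simp [h0 j hj]) (by simp), hi1]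
    simp
  rw [expLinError, hs, hs]
  ring

lemma abs_sub_pow_mul_le_sum_of_recurrence {a e : ℕ → ℝ} {q : ℝ} (hq0 : 0 ≤ q) (hq1 : q ≤ 1)
    (h : ∀ n, a (n + 1) = q * a n + e n) (n : ℕ) :
    |a n - q ^ n * a 0| ≤ ∑ j ∈ Finset.range n, |e j| := by
  induction n with
  | zero => simp
  | succ n ih =>
    have : a (n + 1) - q ^ (n + 1) * a 0 = q * (a n - q ^ n * a 0) + e n := by rw [h]; ring
    rw [this, Finset.sum_range_succ]
    refine (abs_add_le _ _).trans (add_le_add_left ?_ _)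
    rw [abs_mul, abs_of_nonneg hq0]
    exact (mul_le_of_le_one_left (abs_nonneg _) hq1).trans ih

section CountingProcess

variable {Ω ι : Type*} [Fintype ι] {mΩ : MeasurableSpace Ω} {P : Measure Ω}
  {𝓕 : Filtration NNReal mΩ} {N : ι → NNReal → Ω → ℕ} {C α : ι → ℝ}

lemma integrable_count_of_martingale [IsFiniteMeasure P] {n : NNReal → Ω → ℕ} {c : ℝ}
    (hmart : Martingale (fun (s : NNReal) (ω : Ω) => (n s ω : ℝ) - c * (s : ℝ)) 𝓕 P)
    (s : NNReal) : Integrable (fun ω => (n s ω : ℝ)) P := by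
  exact ((hmart.integrable s).add (integrable_const (c * (s : ℝ)))).congr
    (Eventually.of_forall fun ω => sub_add_cancel _ _)

/-- The sum of the linearization errors of the increments over `n` consecutive time intervals of
length `h` starting at `r`. -/
noncomputable def totalExpLinError (α : ι → ℝ) (N : ι → NNReal → Ω → ℕ) (r h : NNReal) (n : ℕ)
    (ω : Ω) : ℝ :=
  ∑ j ∈ Finset.range n,
    |expLinError α fun i => N i (r + (j + 1 : ℕ) * h) ω - N i (r + j * h) ω|

lemma totalExpLinError_le (hα : ∀ i, 0 ≤ α i) (hmono : ∀ i ω, Monotone fun s => N i s ω)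
    (r h : NNReal) (n : ℕ) (ω : Ω) :
    totalExpLinError α N r h n ω ≤ ∑ i, (N i (r + n * h) ω : ℝ) := by
  have key : totalExpLinError α N r h n ω ≤
      ∑ j ∈ Finset.range n, ((∑ i, (N i (r + (j + 1 : ℕ) * h) ω : ℝ))
        - ∑ i, (N i (r + j * h) ω : ℝ)) := by
    refine Finset.sum_le_sum fun j _ => (abs_expLinError_le hα _).trans_eq ?_
    rw [Nat.cast_sum, ← Finset.sum_sub_distrib]
    refine Finset.sum_congr rfl fun i _ => Nat.cast_sub (hmono i ω ?_)
    gcongr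
    exact Nat.le_succ j
  rw [Finset.sum_range_sub (fun j : ℕ => ∑ i, (N i (r + j * h) ω : ℝ))] at key
  have : 0 ≤ ∑ i, (N i (r + (0 : ℕ) * h) ω : ℝ) :=
    Finset.sum_nonneg fun i _ => Nat.cast_nonneg _
  linarith

lemma measurable_expLinError (hmeas : ∀ i s, Measurable (N i s)) (a b : NNReal) :
    Measurable fun ω => expLinError α fun i => N i b ω - N i a ω := by
  have h : ∀ i, Measurable fun ω => ((N i b ω - N i a ω : ℕ) : ℝ) := fun i =>
    measurable_from_top.comp ((hmeas i b).sub (hmeas i a))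
  unfold expLinError
  fun_prop

lemma eventually_totalExpLinError_eq_zero (hmono : ∀ i ω, Monotone fun s => N i s ω)
    (hrc : ∀ i ω s, ∀ᶠ t in 𝓝[≥] s, N i t ω = N i s ω)
    (hunit : ∀ ω, UnitJumps fun s => ∑ i, N i s ω) (α : ι → ℝ) (r T : NNReal) (ω : Ω) :
    ∀ᶠ n : ℕ in atTop, totalExpLinError α N r (T / n) n ω = 0 := by
  obtain ⟨δ, hδ, h⟩ := (hunit ω).exists_forall_dist_lt_le_add_one
    (fun a b hab => Finset.sum_le_sum fun i _ => hmono i ω hab)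
    (fun s => by
      filter_upwards [eventually_all.2 fun i => hrc i ω s] with t ht
      exact Finset.sum_congr rfl fun i _ => ht i)
    (isCompact_Icc (a := r) (b := r + T))
  have hlim : ∀ᶠ n : ℕ in atTop, (T : ℝ) / n < δ :=
    (tendsto_const_div_atTop_nhds_zero_nat (T : ℝ)).eventually_lt_const hδ
  filter_upwards [hlim, eventually_gt_atTop 0] with n hn hn0
  refine Finset.sum_eq_zero fun j hj => ?_
  rw [abs_eq_zero]
  apply expLinError_eq_zero
  have hle : r + (j : NNReal) * (T / n) ≤ r + (j + 1 : ℕ) * (T / n) := by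
    gcongr
    exact Nat.le_succ j
  have hend : r + (j : NNReal) * (T / n) ≤ r + T := by
    have hjn : (j : NNReal) ≤ n := by exact_mod_cast (Finset.mem_range.1 hj).le
    have hn0 : (n : NNReal) ≠ 0 := by exact_mod_cast hn0.ne'
    calc r + (j : NNReal) * (T / n) ≤ r + n * (T / n) := by gcongr
      _ = r + T := by rw [mul_div_cancel₀ _ hn0]
  have := h _ ⟨le_self_add, hend⟩ (r + (j + 1 : ℕ) * (T / n)) (by
    rw [NNReal.dist_eq]
    push_cast
    rw [abs_of_nonneg (by ring_nf; positivity)]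
    linarith)
  exact (Finset.sum_tsub_distrib _ fun i _ => hmono i ω hle).trans_le
    (tsub_le_iff_left.2 this)

lemma tendsto_integral_totalExpLinError [IsProbabilityMeasure P]
    (hmeas : ∀ i s, Measurable (N i s)) (hmono : ∀ i ω, Monotone fun s => N i s ω)
    (hrc : ∀ i ω s, ∀ᶠ t in 𝓝[≥] s, N i t ω = N i s ω)
    (hunit : ∀ ω, UnitJumps fun s => ∑ i, N i s ω)
    (hint : ∀ i s, Integrable (fun ω => (N i s ω : ℝ)) P) (hα : ∀ i, 0 ≤ α i) (r T : NNReal) :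
    Tendsto (fun n : ℕ => ∫ ω, totalExpLinError α N r (T / n) n ω ∂P) atTop (𝓝 0) := by
  rw [← integral_zero Ω ℝ (μ := P)]
  refine tendsto_integral_filter_of_dominated_convergence
    (fun ω => ∑ i, (N i (r + T) ω : ℝ)) ?_ ?_ (integrable_finsetSum _ fun i _ => hint i _) ?_
  · refine Eventually.of_forall fun n => Measurable.aestronglyMeasurable ?_
    exact Finset.measurable_fun_sum _ fun j _ => (measurable_expLinError hmeas _ _).abs
  · filter_upwards [eventually_gt_atTop 0] with n hn
    refine Eventually.of_forall fun ω => ?_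
    have hn0 : (n : NNReal) ≠ 0 := by exact_mod_cast hn.ne'
    have := totalExpLinError_le hα hmono r (T / n) n ω
    rw [mul_div_cancel₀ _ hn0] at this
    rwa [totalExpLinError, Real.norm_of_nonneg (Finset.sum_nonneg fun _ _ => abs_nonneg _)]
  · exact Eventually.of_forall fun ω => tendsto_const_nhds.congr'
      (EventuallyEq.symm (eventually_totalExpLinError_eq_zero hmono hrc hunit α r T ω))

/-- One-step evolution of the integral of `exp (-∑ αᵢ Nᵢ)` against a bounded function of the
past. -/
lemma integral_mul_exp_neg_increment [IsProbabilityMeasure P]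
    (hmono : ∀ i ω, Monotone fun s => N i s ω)
    (hmeas : ∀ i s, Measurable (N i s))
    (hmart : ∀ i, Martingale (fun (s : NNReal) (ω : Ω) => (N i s ω : ℝ) - C i * (s : ℝ)) 𝓕 P)
    (hα : ∀ i, 0 ≤ α i) {a b : NNReal} (hab : a ≤ b)
    {Z : Ω → ℝ} (hZ : StronglyMeasurable[𝓕 a] Z) (hZ1 : ∀ ω, |Z ω| ≤ 1) :
    ∫ ω, Z ω * Real.exp (-∑ i, α i * ((N i b ω : ℝ) - N i a ω)) ∂P =
      (1 - (∑ i, C i * (1 - Real.exp (-α i))) * ((b : ℝ) - a)) * ∫ ω, Z ω ∂P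
        + ∫ ω, Z ω * expLinError α (fun i => N i b ω - N i a ω) ∂P := by
  have hcast : ∀ i ω, ((N i b ω - N i a ω : ℕ) : ℝ) = (N i b ω : ℝ) - N i a ω :=
    fun i ω => Nat.cast_sub (hmono i ω hab)
  have hZm := (hZ.mono (𝓕.le a)).aestronglyMeasurable (μ := P)
  have hZint : Integrable Z P :=
    Integrable.of_bound hZm 1 (Eventually.of_forall hZ1)
  have hNint := fun i => integrable_count_of_martingale (hmart i)
  have hΔ : ∀ i, Integrable (fun ω => Z ω * ((N i b ω : ℝ) - N i a ω)) P := fun i =>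
    ((hNint i b).sub (hNint i a)).bdd_mul hZm (Eventually.of_forall hZ1)
  have hE : Integrable (fun ω => expLinError α fun i => N i b ω - N i a ω) P := by
    refine (integrable_finsetSum Finset.univ fun i _ => (hNint i b).sub (hNint i a)).mono'
      (measurable_expLinError hmeas a b).aestronglyMeasurable (Eventually.of_forall fun ω => ?_)
    refine (abs_expLinError_le hα _).trans_eq ?_
    simp [hcast]
  have hZE : Integrable (fun ω => Z ω * expLinError α fun i => N i b ω - N i a ω) P :=
    hE.bdd_mul hZm (Eventually.of_forall hZ1)
  have hcomp : ∀ i, ∫ ω, Z ω * ((N i b ω : ℝ) - N i a ω) ∂P =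
      C i * ((b : ℝ) - a) * ∫ ω, Z ω ∂P := by
    intro i
    have h0 := integral_mul_martingale_increment_eq_zero (hmart i) hab hZ hZ1
    have : ∀ ω, Z ω * (((N i b ω : ℝ) - C i * b) - ((N i a ω : ℝ) - C i * a)) =
        Z ω * ((N i b ω : ℝ) - N i a ω) - C i * ((b : ℝ) - a) * Z ω := fun ω => by ring
    simp_rw [this] at h0
    rw [integral_sub (hΔ i) (hZint.const_mul _), integral_const_mul] at h0
    linarith
  have hpt : ∀ ω, Z ω * Real.exp (-∑ i, α i * ((N i b ω : ℝ) - N i a ω)) =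
      Z ω - (∑ i, (1 - Real.exp (-α i)) * (Z ω * ((N i b ω : ℝ) - N i a ω)))
        + Z ω * expLinError α (fun i => N i b ω - N i a ω) := by
    intro ω
    have : ∑ i, (1 - Real.exp (-α i)) * (Z ω * ((N i b ω : ℝ) - N i a ω)) =
        Z ω * ∑ i, (1 - Real.exp (-α i)) * ((N i b ω : ℝ) - N i a ω) := by
      rw [Finset.mul_sum]
      exact Finset.sum_congr rfl fun i _ => by ring
    rw [this, expLinError]
    simp_rw [hcast]
    ring
  have hsum : Integrable
      (fun ω => ∑ i, (1 - Real.exp (-α i)) * (Z ω * ((N i b ω : ℝ) - N i a ω))) P :=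
    integrable_finsetSum _ fun i _ => (hΔ i).const_mul _
  simp_rw [hpt]
  have hlin : Integrable (fun ω => Z ω -
      ∑ i, (1 - Real.exp (-α i)) * (Z ω * ((N i b ω : ℝ) - N i a ω))) P := hZint.sub hsum
  rw [integral_add hlin hZE, integral_sub hZint hsum,
    integral_finsetSum _ fun i _ => (hΔ i).const_mul _]
  simp_rw [integral_const_mul, hcomp]
  rw [sub_mul, one_mul, Finset.sum_mul, Finset.sum_mul]
  congr 2
  exact Finset.sum_congr rfl fun i _ => by ring

lemma setIntegral_exp_neg_increment [IsProbabilityMeasure P]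
    (hadapt : ∀ i, Adapted 𝓕 (N i)) (hmono : ∀ i ω, Monotone fun s => N i s ω)
    (hrc : ∀ i ω s, ∀ᶠ t in 𝓝[≥] s, N i t ω = N i s ω)
    (hunit : ∀ ω, UnitJumps fun s => ∑ i, N i s ω) (hC : ∀ i, 0 ≤ C i)
    (hmart : ∀ i, Martingale (fun (s : NNReal) (ω : Ω) => (N i s ω : ℝ) - C i * (s : ℝ)) 𝓕 P)
    (hα : ∀ i, 0 ≤ α i) (r T : NNReal) {A : Set Ω} (hA : MeasurableSet[𝓕 r] A) :
    ∫ ω in A, Real.exp (-∑ i, α i * ((N i (r + T) ω : ℝ) - N i r ω)) ∂P =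
      Real.exp (-((∑ i, C i * (1 - Real.exp (-α i))) * T)) * P.real A := by
  set lam := ∑ i, C i * (1 - Real.exp (-α i)) with hlam
  have hlam0 : 0 ≤ lam := Finset.sum_nonneg fun i _ => mul_nonneg (hC i)
    (sub_nonneg.2 (Real.exp_le_one_iff.2 (neg_nonpos.2 (hα i))))
  have hmeas : ∀ i s, Measurable (N i s) := fun i s => (hadapt i s).mono (𝓕.le s) le_rfl
  have hNint := fun i => integrable_count_of_martingale (hmart i)
  let X : NNReal → Ω → ℝ := fun t => A.indicator
    fun ω => Real.exp (-∑ i, α i * ((N i t ω : ℝ) - N i r ω))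
  have hXm : ∀ t, r ≤ t → StronglyMeasurable[𝓕 t] (X t) := by
    intro t hrt
    have h1 : ∀ i, Measurable[𝓕 t] fun ω => (N i t ω : ℝ) := fun i =>
      measurable_from_top.comp (hadapt i t)
    have h2 : ∀ i, Measurable[𝓕 t] fun ω => (N i r ω : ℝ) := fun i =>
      measurable_from_top.comp ((hadapt i r).mono (𝓕.mono hrt) le_rfl)
    refine Measurable.stronglyMeasurable (Measurable.indicator ?_ (𝓕.mono hrt _ hA))
    exact Real.measurable_exp.comp (Finset.measurable_fun_sum _ fun i _ =>
      ((h1 i).sub (h2 i)).const_mul (α i)).neg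
  have hX1 : ∀ t, r ≤ t → ∀ ω, |X t ω| ≤ 1 := by
    intro t hrt ω
    by_cases hω : ω ∈ A
    · simp only [X, Set.indicator_of_mem hω, Real.abs_exp]
      refine Real.exp_le_one_iff.2 (neg_nonpos.2 (Finset.sum_nonneg fun i _ =>
        mul_nonneg (hα i) (sub_nonneg.2 ?_)))
      exact_mod_cast hmono i ω hrt
    · simp [X, Set.indicator_of_notMem hω]
  have hXmul : ∀ a b ω, X b ω =
      X a ω * Real.exp (-∑ i, α i * ((N i b ω : ℝ) - N i a ω)) := by
    intro a b ω
    by_cases hω : ω ∈ A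
    · simp only [X, Set.indicator_of_mem hω]
      rw [← Real.exp_add, ← neg_add, ← Finset.sum_add_distrib]
      congr 2
      exact Finset.sum_congr rfl fun i _ => by ring
    · simp [X, Set.indicator_of_notMem hω]
  have hX0 : ∫ ω, X r ω ∂P = P.real A := by
    have : X r = A.indicator 1 := by simp [X]; rfl
    rw [this, integral_indicator_one (𝓕.le r _ hA)]
  have hbound : ∀ᶠ n : ℕ in atTop,
      |∫ ω, X (r + T) ω ∂P - (1 + -(lam * T) / n) ^ n * P.real A| ≤
        ∫ ω, totalExpLinError α N r (T / n) n ω ∂P := by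
    filter_upwards [eventually_gt_atTop 0,
      (tendsto_const_div_atTop_nhds_zero_nat (lam * T)).eventually_lt_const one_pos]
      with n hn hn1
    have hn0 : (n : NNReal) ≠ 0 := by exact_mod_cast hn.ne'
    have hle : ∀ j : ℕ, r + (j : NNReal) * (T / n) ≤ r + (j + 1 : ℕ) * (T / n) := fun j => by
      gcongr
      exact Nat.le_succ j
    have hE : ∀ j : ℕ, Integrable (fun ω => expLinError α fun i =>
        N i (r + (j + 1 : ℕ) * (T / n)) ω - N i (r + j * (T / n)) ω) P := by
      intro j
      refine (integrable_finsetSum Finset.univ fun i _ =>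
        (hNint i (r + (j + 1 : ℕ) * (T / n)))).mono'
        (measurable_expLinError hmeas _ _).aestronglyMeasurable (Eventually.of_forall fun ω => ?_)
      refine (abs_expLinError_le hα _).trans ?_
      rw [Nat.cast_sum]
      exact Finset.sum_le_sum fun i _ => Nat.cast_le.2 (Nat.sub_le _ _)
    have hrec := abs_sub_pow_mul_le_sum_of_recurrence
      (a := fun j : ℕ => ∫ ω, X (r + j * (T / n)) ω ∂P)
      (e := fun j : ℕ => ∫ ω, X (r + j * (T / n)) ω * expLinError α (fun i =>
        N i (r + (j + 1 : ℕ) * (T / n)) ω - N i (r + j * (T / n)) ω) ∂P)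
      (q := 1 + -(lam * T) / n) (by rw [neg_div]; linarith)
      (by rw [neg_div]; linarith [show 0 ≤ lam * T / n by positivity])
      (fun j => by
        simp_rw [hXmul (r + j * (T / n)) (r + (j + 1 : ℕ) * (T / n))]
        rw [integral_mul_exp_neg_increment hmono hmeas hmart hα (hle j) (hXm _ le_self_add)
          (hX1 _ le_self_add)]
        congr 2
        push_cast
        ring) n
    simp only [Nat.cast_zero, zero_mul, add_zero, mul_div_cancel₀ _ hn0, hX0] at hrec
    refine hrec.trans ?_
    unfold totalExpLinError
    rw [integral_finsetSum _ fun j _ => (hE j).abs]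
    refine Finset.sum_le_sum fun j _ => abs_integral_le_integral_abs.trans ?_
    refine integral_mono_of_nonneg (Eventually.of_forall fun ω => abs_nonneg _) (hE j).abs
      (Eventually.of_forall fun ω => ?_)
    simp only [abs_mul]
    exact mul_le_of_le_one_left (abs_nonneg _) (hX1 _ le_self_add ω)
  have hlim := (tendsto_integral_totalExpLinError hmeas hmono hrc hunit hNint hα r T)
  have hdiff : Tendsto (fun n : ℕ => ∫ ω, X (r + T) ω ∂P - (1 + -(lam * T) / n) ^ n * P.real A)
      atTop (𝓝 0) := squeeze_zero_norm' hbound hlim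
  have hexp := (tendsto_const_nhds (x := ∫ ω, X (r + T) ω ∂P)).sub
    ((Real.tendsto_one_add_div_pow_exp (-(lam * T))).mul_const (P.real A))
  rw [← integral_indicator (𝓕.le r _ hA)]
  exact sub_eq_zero.1 (tendsto_nhds_unique hexp hdiff)

end CountingProcess

/-- If `N₁, …, N_k` are point (counting) processes adapted to a
filtration `𝓕`, starting from `0`, nondecreasing, right-continuous, with all jumps of
size one, no two of them jumping at the same time (the sum also has unit jumps), and
such that `N_i(s) - C_i s` is a martingale, then for all `0 ≤ r < s` and all
`α_i ≥ 0`,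
`E[exp(-∑ᵢ αᵢ (Nᵢ(s) - Nᵢ(r))) | 𝓕 r] = ∏ᵢ exp(-Cᵢ (s - r)(1 - e^{-αᵢ}))` a.s.,
which is the characterization of `N₁, …, N_k` being mutually independent Poisson
processes with intensities `C₁, …, C_k`. -/
theorem stmt18 {Ω : Type*} {mΩ : MeasurableSpace Ω}
    (P : Measure Ω) [IsProbabilityMeasure P]
    (𝓕 : Filtration NNReal mΩ)
    (k : ℕ) (Np : Fin k → NNReal → Ω → ℕ)
    (hadapt : ∀ i, Adapted 𝓕 (Np i))
    (hzero : ∀ i ω, Np i 0 ω = 0)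
    (hmono : ∀ i ω, Monotone (fun s => Np i s ω))
    (hrc : ∀ i ω s, ∃ δ : NNReal, 0 < δ ∧
      ∀ t : NNReal, s ≤ t → t < s + δ → Np i t ω = Np i s ω)
    (hunit : ∀ i ω, UnitJumps (fun s => Np i s ω))
    (hsum_unit : ∀ ω, UnitJumps (fun s => ∑ i, Np i s ω))
    (C : Fin k → ℝ) (hC : ∀ i, 0 ≤ C i)
    (hmart : ∀ i, Martingale (fun (s : NNReal) (ω : Ω) =>
      (Np i s ω : ℝ) - C i * (s : ℝ)) 𝓕 P) :
    ∀ r s : NNReal, r < s → ∀ α : Fin k → ℝ, (∀ i, 0 ≤ α i) →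
      P[(fun ω => Real.exp (-(∑ i, α i * ((Np i s ω : ℝ) - (Np i r ω : ℝ))))) | 𝓕 r]
        =ᵐ[P] fun _ =>
          ∏ i, Real.exp (-(C i) * ((s : ℝ) - (r : ℝ)) * (1 - Real.exp (-(α i)))) := by
  intro r s hrs α hα
  obtain ⟨T, rfl⟩ := exists_add_of_le hrs.le
  have hrc' : ∀ i ω s, ∀ᶠ t in 𝓝[≥] s, Np i t ω = Np i s ω := by
    intro i ω s
    obtain ⟨δ, hδ, h⟩ := hrc i ω s
    filter_upwards [self_mem_nhdsWithin,
      mem_nhdsWithin_of_mem_nhds (gt_mem_nhds (lt_add_of_pos_right s hδ))] with t h1 h2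
    exact h t h1 h2
  have hmeas : ∀ i s, Measurable fun ω => (Np i s ω : ℝ) := fun i s =>
    measurable_from_top.comp ((hadapt i s).mono (𝓕.le s) le_rfl)
  have hint : Integrable
      (fun ω => Real.exp (-(∑ i, α i * ((Np i (r + T) ω : ℝ) - (Np i r ω : ℝ))))) P := by
    refine Integrable.of_bound (C := 1) (Measurable.aestronglyMeasurable (by fun_prop))
      (Eventually.of_forall fun ω => ?_)
    rw [Real.norm_eq_abs, Real.abs_exp]
    refine Real.exp_le_one_iff.2 (neg_nonpos.2 (Finset.sum_nonneg fun i _ =>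
      mul_nonneg (hα i) (sub_nonneg.2 ?_)))
    exact_mod_cast hmono i ω le_self_add
  refine (ae_eq_condExp_of_forall_setIntegral_eq (𝓕.le r) hint
    (fun A _ _ => (integrable_const _).integrableOn) (fun A hA _ => ?_)
    stronglyMeasurable_const.aestronglyMeasurable).symm
  rw [setIntegral_exp_neg_increment hadapt hmono hrc' hsum_unit hC hmart hα r T hA,
    setIntegral_const, smul_eq_mul, mul_comm, ← Real.exp_sum, Finset.sum_mul,
    ← Finset.sum_neg_distrib]
  congr 2
  refine Finset.sum_congr rfl fun i _ => ?_
  push_cast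
  ring
end
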